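/- arXiv:2107.04579 — 2 statements merged into one kernel-verified Lean document; each statement's English description precedes it below -/
import Mathlib

section
/- Let q ≥ 2 and let j be an integer with 2 ≤ j ≤ q+1. Then K_j^{q+1,q}(q−1) = (−1)^j · (q / (j(j−1))) · C(q−1, j−2) · ( q(j² − 3j + 1) + 1 ), as an identity of rational numbers, where C(·,·) denotes the binomial coefficient. -/
/-- The Krawtchouck polynomial value
`K_j^{n,q}(x) = ∑_{l=0}^{j} (−1)^l (q−1)^{j−l} C(x,l) C(n−x,j−l)` as a rational number. -/
def kraw (n q j x : ℕ) : ℚ :=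
  ∑ l ∈ Finset.range (j + 1),
    (-1 : ℚ) ^ l * ((q : ℚ) - 1) ^ (j - l) * (x.choose l : ℚ) * ((n - x).choose (j - l) : ℚ)

/-!
Since `n - x = 2`, the factor `C(n - x, j - l)` leaves only the terms `j - l ∈ {0, 1, 2}`, and the
surviving binomial coefficients `C(x, j)` and `C(x, j - 1)` are rational multiples of
`C(x, j - 2)`.
-/

theorem cast_choose_succ_eq_div {K : Type*} [DivisionRing K] [CharZero K] (n k : ℕ) :
    (n.choose (k + 1) : K) = n.choose k * (n - k) / (k + 1) := by
  rw [eq_div_iff (Nat.cast_add_one_ne_zero k)]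
  rcases le_or_gt k n with hkn | hnk
  · rw [← Nat.cast_sub hkn]
    exact_mod_cast Nat.choose_succ_right_eq n k
  · simp [Nat.choose_eq_zero_of_lt hnk, Nat.choose_eq_zero_of_lt (Nat.lt_succ_of_lt hnk)]

theorem kraw_add_eq_sum_range (x q : ℕ) {d j : ℕ} (hdj : d ≤ j) :
    kraw (x + d) q j x =
      ∑ i ∈ Finset.range (d + 1),
        (-1 : ℚ) ^ (j - i) * ((q : ℚ) - 1) ^ i * x.choose (j - i) * d.choose i := by
  let term (i : ℕ) : ℚ :=
    (-1) ^ (j - i) * ((q : ℚ) - 1) ^ i * x.choose (j - i) * d.choose i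
  have hterm : ∀ i ≥ d + 1, term i = 0 := fun i hi => by
    simp only [term, Nat.choose_eq_zero_of_lt hi, Nat.cast_zero, mul_zero]
  calc
    kraw (x + d) q j x = ∑ i ∈ Finset.range (j + 1), term i := by
      rw [kraw, ← Finset.sum_flip, Nat.add_sub_cancel_left]
      refine Finset.sum_congr rfl fun i hi => ?_
      rw [Nat.sub_sub_self (Nat.lt_succ_iff.1 (Finset.mem_range.1 hi))]
    _ = ∑ i ∈ Finset.range (d + 1), term i :=
      Finset.eventually_constant_sum hterm (Nat.succ_le_succ hdj)

theorem kraw_add_two (x q k : ℕ) :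
    kraw (x + 2) q (k + 2) x =
      (-1 : ℚ) ^ k * (((q : ℚ) - 1) ^ 2 * x.choose k - 2 * ((q : ℚ) - 1) * x.choose (k + 1) +
        x.choose (k + 2)) := by
  rw [kraw_add_eq_sum_range x q (Nat.le_add_left 2 k)]
  simp only [Finset.sum_range_succ, Finset.sum_range_zero, Nat.add_sub_cancel, Nat.sub_zero,
    Nat.choose_zero_right, Nat.choose_one_right, Nat.choose_self,
    show k + 2 - 1 = k + 1 from rfl]
  push_cast
  ring

theorem kraw_at_q_sub_one_general (x q : ℕ) {j : ℕ} (hj : 2 ≤ j) :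
    kraw (x + 2) q j x =
      (-1 : ℚ) ^ j * (x.choose (j - 2) / ((j : ℚ) * (j - 1))) *
        (j * (j - 1) * ((q : ℚ) - 1) ^ 2 - 2 * j * ((q : ℚ) - 1) * (x + 2 - j) +
          (x + 2 - j) * (x + 1 - j)) := by
  obtain ⟨k, rfl⟩ := Nat.exists_eq_add_of_le' hj
  have hj_sub : ((k + 2 : ℕ) : ℚ) - 1 = k + 1 := by push_cast; ring
  rw [kraw_add_two, cast_choose_succ_eq_div x (k + 1), cast_choose_succ_eq_div x k, hj_sub,
    Nat.add_sub_cancel]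
  push_cast
  field_simp
  ring

/-- For `q ≥ 2` and `2 ≤ j ≤ q+1`:
`K_j^{q+1,q}(q−1) = (−1)^j (q/(j(j−1))) C(q−1, j−2) (q(j²−3j+1)+1)`. -/
theorem kraw_at_q_sub_one (q j : ℕ) (hq : 2 ≤ q) (hj2 : 2 ≤ j) (hjq : j ≤ q + 1) :
    kraw (q + 1) q j (q - 1)
      = (-1 : ℚ) ^ j * ((q : ℚ) / ((j : ℚ) * ((j : ℚ) - 1))) * ((q - 1).choose (j - 2) : ℚ)
          * ((q : ℚ) * ((j : ℚ) ^ 2 - 3 * (j : ℚ) + 1) + 1) := by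
  obtain ⟨m, rfl⟩ := Nat.exists_eq_add_of_le' (one_le_two.trans hq)
  rw [Nat.add_sub_cancel, kraw_at_q_sub_one_general m (m + 1) hj2]
  push_cast
  ring
end

section
/- Let q ≥ 2 and let j be an integer with 2 ≤ j ≤ q+1. Then K_j^{q+1,q}(q) = (−1)^j · (q / (j(j−1))) · C(q−1, j−2) · ( 1 − q(j−1) ), as an identity of rational numbers, where C(·,·) denotes the binomial coefficient. -/
/-! For `x = n - 1` the factor `C(n - x, j - l) = C(1, j - l)` kills every term of `K_j^{n,q}(x)`
except those with `l = j - 1` and `l = j`. Pascal's rule and the absorption identity merge these two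
terms into a single product. -/

theorem kraw_add_one_self (n q j : ℕ) :
    kraw (n + 1) q (j + 1) n =
      (-1) ^ (j + 1) * ((n.choose (j + 1) : ℚ) - ((q : ℚ) - 1) * n.choose j) := by
  have vanishing : ∀ l ∈ Finset.range j, (n + 1 - n).choose (j + 1 - l) = 0 := fun l hl ↦
    Nat.choose_eq_zero_of_lt (by have := Finset.mem_range.mp hl; omega)
  rw [kraw, Finset.sum_range_succ, Finset.sum_range_succ,
    Finset.sum_eq_zero fun l hl ↦ by rw [vanishing l hl, Nat.cast_zero, mul_zero]]
  simp only [Nat.add_sub_cancel_left, Nat.sub_self, Nat.choose_self, Nat.choose_zero_right]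
  push_cast
  ring

theorem add_one_mul_kraw_add_one_self (n q j : ℕ) :
    ((j : ℚ) + 1) * kraw (n + 1) q (j + 1) n =
      (-1) ^ (j + 1) * n.choose j * ((n : ℚ) + 1 - q * (j + 1)) := by
  have absorption : ((n : ℚ) + 1) * n.choose j = (n.choose j + n.choose (j + 1)) * (j + 1) := by
    exact_mod_cast Nat.choose_succ_succ n j ▸ Nat.add_one_mul_choose_eq n j
  rw [kraw_add_one_self]
  linear_combination -(-1) ^ (j + 1) * absorption

theorem kraw_at_q_general (n q : ℕ) {j : ℕ} (hj : 2 ≤ j) :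
    kraw (n + 1) q j n =
      (-1) ^ j * ((n : ℚ) / (j * (j - 1))) * (n - 1).choose (j - 2) * ((n : ℚ) + 1 - q * j) := by
  obtain ⟨k, rfl⟩ := Nat.exists_eq_add_of_le' hj
  have absorption : (n : ℚ) * (n - 1).choose k = n.choose (k + 1) * (k + 1) := by
    cases n with
    | zero => simp
    | succ m => exact_mod_cast Nat.add_one_mul_choose_eq m k
  have closed_form := add_one_mul_kraw_add_one_self n q (k + 1)
  have pred_eq : (k : ℚ) + 2 - 1 = k + 1 := by ring
  simp only [Nat.add_sub_cancel]
  push_cast at closed_form ⊢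
  rw [pred_eq]
  field_simp
  linear_combination (k + 1) * closed_form -
    (-1) ^ (k + 2) * ((n : ℚ) + 1 - q * (k + 2)) * absorption

/-- For `q ≥ 2` and `2 ≤ j ≤ q+1`:
`K_j^{q+1,q}(q) = (−1)^j (q/(j(j−1))) C(q−1, j−2) (1 − q(j−1))`. -/
theorem kraw_at_q (q j : ℕ) (hq : 2 ≤ q) (hj2 : 2 ≤ j) (hjq : j ≤ q + 1) :
    kraw (q + 1) q j q
      = (-1 : ℚ) ^ j * ((q : ℚ) / ((j : ℚ) * ((j : ℚ) - 1))) * ((q - 1).choose (j - 2) : ℚ)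
          * (1 - (q : ℚ) * ((j : ℚ) - 1)) := by
  rw [kraw_at_q_general q q hj2]
  ring
end
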